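/- arXiv:math/0108124 — 3 statements merged into one kernel-verified Lean document; each statement's English description precedes it below -/
import Mathlib

section
/- Let X and Y be real normed vector spaces with X infinite-dimensional, let T : X → Y be a bounded linear operator, and let E be a dense linear subspace of X. Then Γ(T|_E) = Γ(T), where Γ(T|_E) is computed with E in place of X; i.e., the quantity Γ is densely invariant for bounded operators. -/
/-- The operator norm of the restriction of `T` to a subspace `M`. -/
noncomputable def restrictedNorm {X Y : Type*} [NormedAddCommGroup X] [NormedSpace ℝ X]
    [NormedAddCommGroup Y] [NormedSpace ℝ Y] (T : X →L[ℝ] Y) (M : Submodule ℝ X) : ℝ :=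
  ‖T.comp M.subtypeL‖

/-- `Γ(T) = inf_{M ∈ I(X)} ‖T|_M‖`, the infimum of the norms of the restrictions of `T`
to infinite-dimensional subspaces of the domain. -/
noncomputable def opGamma {X Y : Type*} [NormedAddCommGroup X] [NormedSpace ℝ X]
    [NormedAddCommGroup Y] [NormedSpace ℝ Y] (T : X →L[ℝ] Y) : ℝ :=
  sInf {r : ℝ | ∃ M : Submodule ℝ X, ¬ FiniteDimensional ℝ M ∧ r = restrictedNorm T M}

/-!
Every infinite-dimensional `M` contains a sequence `x` with a biorthogonal sequence `g` of
continuous functionals. By density, pick `y n ∈ E` so close to `x n` that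
`∑ n, ‖g n‖ * ‖y n - x n‖ ≤ δ < 1`. The coefficients of a finite sum `v = ∑ n, a n • x n` are
`a n = g n v`, so `w = ∑ n, a n • y n` satisfies `‖w - v‖ ≤ δ * ‖v‖`. Hence the span of `y` is an
infinite-dimensional subspace of `E` on which the norm of `T` is at most
`(‖T|_M‖ + ‖T‖ * δ) / (1 - δ)`, and `δ → 0` gives `Γ(T|_E) ≤ Γ(T)`. The other inequality holds
because every infinite-dimensional subspace of `E` is one of `X`.
-/

open Filter Topology

section Submodule

variable {K V W : Type*} [DivisionRing K] [AddCommGroup V] [Module K V]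
  [AddCommGroup W] [Module K W]

theorem exists_mem_map_eq_zero_notMem [FiniteDimensional K W] {M : Submodule K V}
    (hM : ¬ FiniteDimensional K M) (f : V →ₗ[K] W) (F : Submodule K V) [FiniteDimensional K F] :
    ∃ z ∈ M, f z = 0 ∧ z ∉ F := by
  by_contra! h
  have hker : M ⊓ LinearMap.ker f ≤ F := fun z hz => h z hz.1 hz.2
  have : FiniteDimensional K ↥(M ⊓ LinearMap.ker f) := Submodule.finiteDimensional_of_le hker
  exact hM (Module.Finite.of_fg (Submodule.fg_of_fg_map_of_fg_inf_ker f
    (IsNoetherian.noetherian _) (Module.Finite.iff_fg.1 this)))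

theorem not_finiteDimensional_span_range {ι : Type*} [Infinite ι] {y : ι → V}
    (hy : LinearIndependent K y) : ¬ FiniteDimensional K (Submodule.span K (Set.range y)) := by
  intro h
  have : Finite ι := Module.Finite.finite_basis (Module.Basis.span hy)
  exact not_finite ι

end Submodule

theorem not_finiteDimensional_of_dense {𝕜 X : Type*} [NontriviallyNormedField 𝕜] [CompleteSpace 𝕜]
    [AddCommGroup X] [Module 𝕜 X] [TopologicalSpace X] [IsTopologicalAddGroup X]
    [ContinuousSMul 𝕜 X] [T2Space X] (hX : ¬ FiniteDimensional 𝕜 X) {E : Submodule 𝕜 X}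
    (hE : Dense (E : Set X)) : ¬ FiniteDimensional 𝕜 E := by
  intro h
  have hclosed : IsClosed (E : Set X) := E.closed_of_finiteDimensional
  have htop : E = ⊤ := SetLike.coe_injective (hclosed.closure_eq.symm.trans hE.closure_eq)
  subst htop
  exact hX (Submodule.topEquiv (R := 𝕜) (M := X)).finiteDimensional

theorem exists_forall_mem_sum_mul_dist_le {ι α : Type*} [Countable ι] [PseudoMetricSpace α]
    {s : Set α} (hs : Dense s) (x : ι → α) (c : ι → ℝ) {δ : ℝ} (hδ : 0 < δ) :
    ∃ y : ι → α, (∀ i, y i ∈ s) ∧ ∀ t : Finset ι, ∑ i ∈ t, c i * dist (y i) (x i) ≤ δ := by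
  have := Encodable.ofCountable ι
  obtain ⟨ε, hε, σ, hσ, hσδ⟩ := posSumOfEncodable hδ ι
  have hc (i : ι) : 0 < |c i| + 1 := by positivity
  choose y hys hy using fun i => hs.exists_dist_lt (x i) (div_pos (hε i) (hc i))
  refine ⟨y, hys, fun t => ?_⟩
  calc ∑ i ∈ t, c i * dist (y i) (x i)
      ≤ ∑ i ∈ t, (|c i| + 1) * (ε i / (|c i| + 1)) := by
        gcongr with i
        · linarith [le_abs_self (c i)]
        · exact (dist_comm (y i) (x i)).trans_le (hy i).le
    _ = ∑ i ∈ t, ε i := Finset.sum_congr rfl fun i _ => mul_div_cancel₀ _ (hc i).ne'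
    _ ≤ σ := sum_le_hasSum t (fun i _ => (hε i).le) hσ
    _ ≤ δ := hσδ

section Perturbation

variable {𝕜 X Y ι : Type*}

theorem sub_mul_norm_le_of_norm_sub_le [SeminormedAddCommGroup X] {v w : X} {δ : ℝ}
    (h : ‖w - v‖ ≤ δ * ‖v‖) : (1 - δ) * ‖v‖ ≤ ‖w‖ := by
  linarith [norm_sub_norm_le v w, norm_sub_rev v w]

theorem linearIndependent_of_norm_linearCombination_sub_le [NormedField 𝕜]
    [NormedAddCommGroup X] [NormedSpace 𝕜 X] {x y : ι → X} (hx : LinearIndependent 𝕜 x)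
    {δ : ℝ} (hδ : δ < 1)
    (h : ∀ a : ι →₀ 𝕜, ‖Finsupp.linearCombination 𝕜 y a - Finsupp.linearCombination 𝕜 x a‖ ≤
      δ * ‖Finsupp.linearCombination 𝕜 x a‖) :
    LinearIndependent 𝕜 y := by
  rw [linearIndependent_iff] at hx ⊢
  intro a ha
  have hle := sub_mul_norm_le_of_norm_sub_le (h a)
  rw [ha, norm_zero] at hle
  exact hx a (norm_le_zero_iff.1 (nonpos_of_mul_nonpos_right hle (sub_pos.2 hδ)))

theorem norm_apply_le_of_norm_sub_le [NontriviallyNormedField 𝕜] [SeminormedAddCommGroup X]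
    [NormedSpace 𝕜 X] [SeminormedAddCommGroup Y] [NormedSpace 𝕜 Y] (T : X →L[𝕜] Y)
    {v w : X} {r δ : ℝ} (hr : 0 ≤ r) (hδ₀ : 0 ≤ δ) (hδ₁ : δ < 1) (hTv : ‖T v‖ ≤ r * ‖v‖)
    (h : ‖w - v‖ ≤ δ * ‖v‖) :
    ‖T w‖ ≤ (r + ‖T‖ * δ) / (1 - δ) * ‖w‖ := by
  have hδ : 0 < 1 - δ := sub_pos.2 hδ₁
  calc ‖T w‖ = ‖T v + T (w - v)‖ := by rw [← map_add, add_sub_cancel]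
    _ ≤ ‖T v‖ + ‖T (w - v)‖ := norm_add_le _ _
    _ ≤ r * ‖v‖ + ‖T‖ * (δ * ‖v‖) := add_le_add hTv (T.le_opNorm_of_le h)
    _ = (r + ‖T‖ * δ) / (1 - δ) * ((1 - δ) * ‖v‖) := by field_simp
    _ ≤ (r + ‖T‖ * δ) / (1 - δ) * ‖w‖ := by
        gcongr
        exact sub_mul_norm_le_of_norm_sub_le h

end Perturbation

/-- A biorthogonal system: vectors `x i` and continuous functionals `g i` such that `g i (x j)` is
`1` if `i = j` and `0` otherwise. On the span of `x`, the `g i` are the coordinate functionals. -/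
structure IsBiorthogonal {𝕜 X ι : Type*} [NormedField 𝕜] [SeminormedAddCommGroup X]
    [NormedSpace 𝕜 X] (x : ι → X) (g : ι → StrongDual 𝕜 X) : Prop where
  apply_self (i : ι) : g i (x i) = 1
  apply_of_ne : Pairwise fun i j => g i (x j) = 0

namespace IsBiorthogonal

variable {𝕜 X ι : Type*} [NontriviallyNormedField 𝕜] [SeminormedAddCommGroup X]
  [NormedSpace 𝕜 X] {x : ι → X} {g : ι → StrongDual 𝕜 X}

theorem apply_linearCombination (h : IsBiorthogonal x g) (i : ι) (a : ι →₀ 𝕜) :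
    g i (Finsupp.linearCombination 𝕜 x a) = a i := by
  rw [Finsupp.linearCombination_apply, map_finsuppSum, Finsupp.sum_eq_single i]
  · rw [map_smul, h.apply_self, smul_eq_mul, mul_one]
  · intro j _ hji
    rw [map_smul, h.apply_of_ne hji.symm, smul_zero]
  · intro _
    rw [zero_smul, map_zero]

theorem linearIndependent (h : IsBiorthogonal x g) : LinearIndependent 𝕜 x := by
  refine linearIndependent_iff.2 fun a ha => Finsupp.ext fun i => ?_
  rw [← h.apply_linearCombination i a, ha, map_zero, Finsupp.zero_apply]

theorem norm_linearCombination_sub_le (h : IsBiorthogonal x g) {y : ι → X} {δ : ℝ}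
    (hδ : ∀ t : Finset ι, ∑ i ∈ t, ‖g i‖ * ‖y i - x i‖ ≤ δ) (a : ι →₀ 𝕜) :
    ‖Finsupp.linearCombination 𝕜 y a - Finsupp.linearCombination 𝕜 x a‖ ≤
      δ * ‖Finsupp.linearCombination 𝕜 x a‖ := by
  set v := Finsupp.linearCombination 𝕜 x a with hv
  have hcoeff (i : ι) : ‖a i‖ ≤ ‖g i‖ * ‖v‖ := by
    rw [← h.apply_linearCombination i a]
    exact (g i).le_opNorm v
  calc ‖Finsupp.linearCombination 𝕜 y a - v‖ = ‖∑ i ∈ a.support, a i • (y i - x i)‖ := by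
        simp only [hv, Finsupp.linearCombination_apply, Finsupp.sum, smul_sub,
          Finset.sum_sub_distrib]
    _ ≤ ∑ i ∈ a.support, ‖g i‖ * ‖v‖ * ‖y i - x i‖ := norm_sum_le_of_le _ fun i _ => by
        rw [norm_smul]
        gcongr
        exact hcoeff i
    _ = (∑ i ∈ a.support, ‖g i‖ * ‖y i - x i‖) * ‖v‖ := by
        simp only [Finset.sum_mul, mul_right_comm]
    _ ≤ δ * ‖v‖ := by
        gcongr
        exact hδ _

end IsBiorthogonal

section InfiniteDimensional

variable {𝕜 X : Type*} [RCLike 𝕜] [NormedAddCommGroup X] [NormedSpace 𝕜 X]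

theorem exists_strongDual_eq_one_of_notMem {F : Submodule 𝕜 X} (hF : IsClosed (F : Set X)) {z : X}
    (hz : z ∉ F) : ∃ g : StrongDual 𝕜 X, (∀ y ∈ F, g y = 0) ∧ g z = 1 := by
  have hz' : F.mkQ z ≠ 0 := by simpa using hz
  obtain ⟨g, hg⟩ := SeparatingDual.exists_eq_one (R := 𝕜) hz'
  refine ⟨g.comp F.mkQL, fun y hy => ?_, hg⟩
  have hy' : F.mkQL y = 0 := (Submodule.Quotient.mk_eq_zero F).2 hy
  rw [ContinuousLinearMap.comp_apply, hy', map_zero]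

theorem exists_isBiorthogonal_seq {M : Submodule 𝕜 X} (hM : ¬ FiniteDimensional 𝕜 M) :
    ∃ (x : ℕ → X) (g : ℕ → StrongDual 𝕜 X), (∀ n, x n ∈ M) ∧ IsBiorthogonal x g := by
  let r (p q : X × StrongDual 𝕜 X) : Prop := p.2 q.1 = 0 ∧ q.2 p.1 = 0
  have : Std.Symm r := ⟨fun _ _ => And.symm⟩
  obtain ⟨p, hp, hr⟩ := exists_seq_of_forall_finset_exists'
      (fun p : X × StrongDual 𝕜 X => p.1 ∈ M ∧ p.2 p.1 = 1) r fun s _ => by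
    let F : Submodule 𝕜 X := Submodule.span 𝕜 (Prod.fst '' (s : Set (X × StrongDual 𝕜 X)))
    have : FiniteDimensional 𝕜 F :=
      FiniteDimensional.span_of_finite 𝕜 (s.finite_toSet.image Prod.fst)
    let f : X →ₗ[𝕜] s → 𝕜 := LinearMap.pi fun q => (q.1.2 : X →ₗ[𝕜] 𝕜)
    obtain ⟨z, hzM, hfz, hzF⟩ := exists_mem_map_eq_zero_notMem hM f F
    obtain ⟨g, hgF, hgz⟩ := exists_strongDual_eq_one_of_notMem F.closed_of_finiteDimensional hzF
    exact ⟨(z, g), ⟨hzM, hgz⟩, fun q hq =>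
      ⟨congrFun hfz ⟨q, hq⟩, hgF q.1 (Submodule.subset_span ⟨q, hq, rfl⟩)⟩⟩
  exact ⟨fun n => (p n).1, fun n => (p n).2, fun n => (hp n).1,
    ⟨fun n => (hp n).2, fun _ _ hmn => (hr hmn).1⟩⟩

theorem exists_submodule_le_forall_norm_sub_le {E : Submodule 𝕜 X} (hE : Dense (E : Set X))
    {M : Submodule 𝕜 X} (hM : ¬ FiniteDimensional 𝕜 M) {δ : ℝ} (hδ₀ : 0 < δ) (hδ₁ : δ < 1) :
    ∃ N ≤ E, ¬ FiniteDimensional 𝕜 N ∧ ∀ w ∈ N, ∃ v ∈ M, ‖w - v‖ ≤ δ * ‖v‖ := by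
  obtain ⟨x, g, hxM, hxg⟩ := exists_isBiorthogonal_seq hM
  obtain ⟨y, hyE, hyx⟩ := exists_forall_mem_sum_mul_dist_le hE x (fun n => ‖g n‖) hδ₀
  simp only [dist_eq_norm] at hyx
  have hclose := hxg.norm_linearCombination_sub_le hyx
  refine ⟨Submodule.span 𝕜 (Set.range y), Submodule.span_le.2 (Set.range_subset_iff.2 hyE),
    not_finiteDimensional_span_range
      (linearIndependent_of_norm_linearCombination_sub_le hxg.linearIndependent hδ₁ hclose),
    fun w hw => ?_⟩
  obtain ⟨a, rfl⟩ := (Finsupp.mem_span_range_iff_exists_finsupp).1 hw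
  exact ⟨Finsupp.linearCombination 𝕜 x a, M.sum_mem fun n _ => M.smul_mem _ (hxM n), hclose a⟩

end InfiniteDimensional

section Gamma

variable {X Y : Type*} [NormedAddCommGroup X] [NormedSpace ℝ X] [NormedAddCommGroup Y]
  [NormedSpace ℝ Y]

theorem restrictedNorm_nonneg (T : X →L[ℝ] Y) (M : Submodule ℝ X) : 0 ≤ restrictedNorm T M :=
  norm_nonneg (T.comp M.subtypeL)

theorem norm_apply_le_restrictedNorm_mul (T : X →L[ℝ] Y) {M : Submodule ℝ X} {v : X} (hv : v ∈ M) :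
    ‖T v‖ ≤ restrictedNorm T M * ‖v‖ :=
  (T.comp M.subtypeL).le_opNorm ⟨v, hv⟩

theorem restrictedNorm_le {T : X →L[ℝ] Y} {M : Submodule ℝ X} {C : ℝ} (hC : 0 ≤ C)
    (h : ∀ v ∈ M, ‖T v‖ ≤ C * ‖v‖) : restrictedNorm T M ≤ C :=
  ContinuousLinearMap.opNorm_le_bound _ hC fun v => h v v.2

theorem restrictedNorm_comp_subtypeL (T : X →L[ℝ] Y) {E : Submodule ℝ X} (N : Submodule ℝ E) :
    restrictedNorm (T.comp E.subtypeL) N = restrictedNorm T (N.map E.subtype) := by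
  apply le_antisymm
  · exact restrictedNorm_le (restrictedNorm_nonneg _ _) fun v hv =>
      norm_apply_le_restrictedNorm_mul T (Submodule.mem_map_of_mem hv)
  · refine restrictedNorm_le (restrictedNorm_nonneg _ _) ?_
    rintro _ ⟨v, hv, rfl⟩
    exact norm_apply_le_restrictedNorm_mul (T.comp E.subtypeL) hv

theorem opGamma_le_restrictedNorm (T : X →L[ℝ] Y) {M : Submodule ℝ X}
    (hM : ¬ FiniteDimensional ℝ M) : opGamma T ≤ restrictedNorm T M :=
  csInf_le ⟨0, by rintro _ ⟨N, -, rfl⟩; exact restrictedNorm_nonneg T N⟩ ⟨M, hM, rfl⟩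

theorem le_opGamma (hX : ¬ FiniteDimensional ℝ X) {T : X →L[ℝ] Y} {C : ℝ}
    (h : ∀ M : Submodule ℝ X, ¬ FiniteDimensional ℝ M → C ≤ restrictedNorm T M) :
    C ≤ opGamma T := by
  have htop : ¬ FiniteDimensional ℝ (⊤ : Submodule ℝ X) := fun _ =>
    hX (Submodule.topEquiv (R := ℝ) (M := X)).finiteDimensional
  refine le_csInf ⟨_, ⊤, htop, rfl⟩ ?_
  rintro _ ⟨M, hM, rfl⟩
  exact h M hM

theorem opGamma_comp_subtypeL_le_restrictedNorm (T : X →L[ℝ] Y) {E N : Submodule ℝ X} (hNE : N ≤ E)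
    (hN : ¬ FiniteDimensional ℝ N) : opGamma (T.comp E.subtypeL) ≤ restrictedNorm T N := by
  have hN' : ¬ FiniteDimensional ℝ (N.submoduleOf E) := fun _ =>
    hN (Submodule.submoduleOfEquivOfLe hNE).finiteDimensional
  calc opGamma (T.comp E.subtypeL) ≤ restrictedNorm (T.comp E.subtypeL) (N.submoduleOf E) :=
        opGamma_le_restrictedNorm _ hN'
    _ = restrictedNorm T N := by
        rw [restrictedNorm_comp_subtypeL, Submodule.submoduleOf, Submodule.map_comap_subtype,
          inf_eq_right.2 hNE]

theorem opGamma_le_opGamma_comp_subtypeL (T : X →L[ℝ] Y) {E : Submodule ℝ X}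
    (hE : ¬ FiniteDimensional ℝ E) : opGamma T ≤ opGamma (T.comp E.subtypeL) := by
  refine le_opGamma hE fun N hN => ?_
  rw [restrictedNorm_comp_subtypeL]
  exact opGamma_le_restrictedNorm T fun _ =>
    hN (N.equivMapOfInjective E.subtype E.injective_subtype).symm.finiteDimensional

theorem opGamma_comp_subtypeL_le_div (T : X →L[ℝ] Y) {E M : Submodule ℝ X}
    (hE : Dense (E : Set X)) (hM : ¬ FiniteDimensional ℝ M) {δ : ℝ} (hδ₀ : 0 < δ) (hδ₁ : δ < 1) :
    opGamma (T.comp E.subtypeL) ≤ (restrictedNorm T M + ‖T‖ * δ) / (1 - δ) := by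
  obtain ⟨N, hNE, hN, hclose⟩ := exists_submodule_le_forall_norm_sub_le hE hM hδ₀ hδ₁
  have hr := restrictedNorm_nonneg T M
  have hC : 0 ≤ (restrictedNorm T M + ‖T‖ * δ) / (1 - δ) :=
    div_nonneg (by positivity) (sub_nonneg.2 hδ₁.le)
  refine (opGamma_comp_subtypeL_le_restrictedNorm T hNE hN).trans
    (restrictedNorm_le hC fun w hw => ?_)
  obtain ⟨v, hv, hwv⟩ := hclose w hw
  exact norm_apply_le_of_norm_sub_le T hr hδ₀.le hδ₁ (norm_apply_le_restrictedNorm_mul T hv) hwv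

theorem opGamma_comp_subtypeL_le_opGamma (hX : ¬ FiniteDimensional ℝ X) (T : X →L[ℝ] Y)
    {E : Submodule ℝ X} (hE : Dense (E : Set X)) : opGamma (T.comp E.subtypeL) ≤ opGamma T := by
  refine le_opGamma hX fun M hM => ?_
  have hlim : Tendsto (fun δ : ℝ => (restrictedNorm T M + ‖T‖ * δ) / (1 - δ)) (𝓝[>] 0)
      (𝓝 (restrictedNorm T M)) := by
    have hcont : ContinuousAt (fun δ : ℝ => (restrictedNorm T M + ‖T‖ * δ) / (1 - δ)) 0 :=
      ContinuousAt.div (by fun_prop) (by fun_prop) (by norm_num)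
    simpa using hcont.tendsto.mono_left nhdsWithin_le_nhds
  refine ge_of_tendsto hlim ?_
  filter_upwards [Ioo_mem_nhdsGT one_pos] with δ hδ
  exact opGamma_comp_subtypeL_le_div T hE hM hδ.1 hδ.2

end Gamma

/-- `Γ` is densely invariant: `Γ(T|_E) = Γ(T)` for any dense subspace `E`. -/
theorem gamma_densely_invariant {X Y : Type*} [NormedAddCommGroup X] [NormedSpace ℝ X]
    [NormedAddCommGroup Y] [NormedSpace ℝ Y] (hX : ¬ FiniteDimensional ℝ X)
    (T : X →L[ℝ] Y) (E : Submodule ℝ X) (hE : Dense (E : Set X)) :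
    opGamma (T.comp E.subtypeL) = opGamma T :=
  le_antisymm (opGamma_comp_subtypeL_le_opGamma hX T hE)
    (opGamma_le_opGamma_comp_subtypeL T (not_finiteDimensional_of_dense hX hE))
end

section
/- Let X be a real normed vector space, let (m_n)_{n≥1} be vectors in X and (x'_n)_{n≥1} continuous linear functionals on X such that for every n, ‖m_n‖ = ‖x'_n‖ = x'_n(m_n) = 1 and x'_i(m_n) = 0 for all 1 ≤ i < n. Let 0 < ε < 1 and 0 < δ ≤ 1, and let (z_n)_{n≥1} be vectors in X satisfying ‖z_n − m_n‖ ≤ 2^{1−2n} ε δ and x'_i(z_n) = 0 for all 1 ≤ i < n. Then the family (z_n)_{n≥1} is linearly independent; in particular, the span of {z_1, z_2, …} is an infinite-dimensional subspace of X. -/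
/-!
Pairing `z n` with `x' n` moves the value `x' n (m n) = 1` by at most `‖z n - m n‖ < 1`, so
`x' n (z n) ≠ 0`. Together with `x' i (z n) = 0` for `i < n` this makes the matrix `x' i (z n)`
triangular with nonzero diagonal: evaluating `x' i` at a linear relation whose least index is `i`
leaves only the diagonal term.
-/

theorem linearIndependent_of_apply_eq_zero_of_lt {ι R M N : Type*} [LinearOrder ι] [Ring R]
    [IsDomain R] [AddCommGroup M] [Module R M] [AddCommGroup N] [Module R N]
    [Module.IsTorsionFree R N] {v : ι → M} (f : ι → M →ₗ[R] N)
    (hdiag : ∀ i, f i (v i) ≠ 0) (hlt : ∀ i j, i < j → f i (v j) = 0) :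
    LinearIndependent R v := by
  rw [linearIndependent_iff]
  intro c hc
  by_contra hc_ne
  have hsupp : c.support.Nonempty := Finsupp.support_nonempty_iff.mpr hc_ne
  let i := c.support.min' hsupp
  have hi : i ∈ c.support := c.support.min'_mem hsupp
  have hother : ∀ j ∈ c.support, j ≠ i → c j • f i (v j) = 0 := fun j hj hji ↦ by
    rw [hlt i j ((c.support.min'_le j hj).lt_of_ne' hji), smul_zero]
  have hleading : c i • f i (v i) = 0 := calc
    c i • f i (v i) = ∑ j ∈ c.support, c j • f i (v j) :=
      (Finset.sum_eq_single_of_mem i hi hother).symm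
    _ = f i (Finsupp.linearCombination R v c) := by
      simp [Finsupp.linearCombination_apply, Finsupp.sum]
    _ = 0 := by rw [hc, map_zero]
  exact smul_ne_zero (Finsupp.mem_support_iff.mp hi) (hdiag i) hleading

theorem not_finite_span_range_of_linearIndependent {ι R M : Type*} [Infinite ι] [Ring R]
    [StrongRankCondition R] [AddCommGroup M] [Module R M] {v : ι → M}
    (hv : LinearIndependent R v) : ¬ Module.Finite R (Submodule.span R (Set.range v)) :=
  fun _ ↦ Module.Finite.not_linearIndependent_of_infinite _ (linearIndependent_span hv)

section Perturbation

variable {𝕜 E F : Type*} [NontriviallyNormedField 𝕜] [SeminormedAddCommGroup E] [NormedSpace 𝕜 E]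
  [SeminormedAddCommGroup F] [NormedSpace 𝕜 F]

theorem apply_ne_zero_of_opNorm_mul_norm_sub_lt (f : E →L[𝕜] F) {x y : E}
    (h : ‖f‖ * ‖y - x‖ < ‖f x‖) : f y ≠ 0 := by
  intro hy
  refine h.not_ge ?_
  calc
    ‖f x‖ = ‖f (y - x)‖ := by rw [map_sub, hy, zero_sub, norm_neg]
    _ ≤ ‖f‖ * ‖y - x‖ := f.le_opNorm _

theorem linearIndependent_perturbed_general {ι : Type*} [LinearOrder ι] [Infinite ι]
    (m : ι → E) (T : ι → E →L[𝕜] F) (z : ι → E)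
    (hz : ∀ n, ‖T n‖ * ‖z n - m n‖ < ‖T n (m n)‖) (hzorth : ∀ i n, i < n → T i (z n) = 0) :
    LinearIndependent 𝕜 z ∧ ¬ FiniteDimensional 𝕜 (Submodule.span 𝕜 (Set.range z)) :=
  have hindep : LinearIndependent 𝕜 z :=
    linearIndependent_of_apply_eq_zero_of_lt (fun i ↦ (T i).toLinearMap)
      (fun i ↦ apply_ne_zero_of_opNorm_mul_norm_sub_lt (T i) (hz i)) hzorth
  ⟨hindep, not_finite_span_range_of_linearIndependent hindep⟩

end Perturbation

theorem mul_div_two_pow_lt_one {ε δ : ℝ} (hε0 : 0 ≤ ε) (hε1 : ε < 1) (hδ0 : 0 ≤ δ) (hδ1 : δ ≤ 1)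
    (k : ℕ) : ε * δ / 2 ^ k < 1 :=
  (div_le_self (mul_nonneg hε0 hδ0) (one_le_pow₀ one_le_two)).trans_lt
    (mul_lt_one_of_nonneg_of_lt_one_left hε0 hε1 hδ1)

/-- Let `(m n)` and `(x' n)` form a biorthogonal system with
`‖m n‖ = ‖x' n‖ = x' n (m n) = 1` and `x' i (m n) = 0` for `i < n`.  If `0 < ε < 1`,
`0 < δ ≤ 1`, and `(z n)` satisfies `‖z n - m n‖ ≤ ε * δ / 2 ^ (2 * n + 1)` together with
`x' i (z n) = 0` for `i < n`, then the family `(z n)` is linearly independent; in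
particular its span is an infinite-dimensional subspace of `X`. (Indexing starts at `0`,
so the paper's bound `2 ^ (1 - 2 * n) * ε * δ` for `n ≥ 1` becomes
`ε * δ / 2 ^ (2 * n + 1)` for `n ≥ 0`.) -/
theorem linearIndependent_perturbed {X : Type*} [NormedAddCommGroup X] [NormedSpace ℝ X]
    (m : ℕ → X) (x' : ℕ → (X →L[ℝ] ℝ))
    (hnorm : ∀ n, ‖m n‖ = 1 ∧ ‖x' n‖ = 1 ∧ x' n (m n) = 1)
    (horth : ∀ i n, i < n → x' i (m n) = 0)
    (ε δ : ℝ) (hε0 : 0 < ε) (hε1 : ε < 1) (hδ0 : 0 < δ) (hδ1 : δ ≤ 1)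
    (z : ℕ → X)
    (hz : ∀ n, ‖z n - m n‖ ≤ ε * δ / 2 ^ (2 * n + 1))
    (hzorth : ∀ i n, i < n → x' i (z n) = 0) :
    LinearIndependent ℝ z ∧
      ¬ FiniteDimensional ℝ (Submodule.span ℝ (Set.range z)) := by
  refine linearIndependent_perturbed_general m x' z (fun n ↦ ?_) hzorth
  simpa [hnorm n] using (hz n).trans_lt (mul_div_two_pow_lt_one hε0.le hε1 hδ0.le hδ1 _)
end

section
/- Let X and Y be real normed vector spaces with X infinite-dimensional, let T : X → Y be a bounded linear operator, and let E be a dense linear subspace of X. Then τ(T|_E) ≥ τ(T). -/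
/-- `inf_{m ∈ S_M} ‖Tm‖`, the infimum of `‖Tm‖` over the unit sphere of a subspace `M`. -/
noncomputable def sphereInf {X Y : Type*} [NormedAddCommGroup X] [NormedSpace ℝ X]
    [NormedAddCommGroup Y] [NormedSpace ℝ Y] (T : X →L[ℝ] Y) (M : Submodule ℝ X) : ℝ :=
  sInf {s : ℝ | ∃ m : X, m ∈ M ∧ ‖m‖ = 1 ∧ s = ‖T m‖}

/-- `τ(T) = sup_{M ∈ I(X)} inf_{m ∈ S_M} ‖Tm‖`. -/
noncomputable def opTau {X Y : Type*} [NormedAddCommGroup X] [NormedSpace ℝ X]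
    [NormedAddCommGroup Y] [NormedSpace ℝ Y] (T : X →L[ℝ] Y) : ℝ :=
  sSup {r : ℝ | ∃ M : Submodule ℝ X, ¬ FiniteDimensional ℝ M ∧ r = sphereInf T M}

/-!
Inside an infinite-dimensional subspace `M` one constructs, by Hahn–Banach, unit vectors `x k` and
norm-one functionals `f k` with `f k (x k) = 1` and `f i (x j) = 0` for `i < j`. Solving the
resulting triangular system for the coefficients gives `‖a k‖ ≤ 2 ^ k * ‖∑ i, a i • x i‖`. Hence
moving each `x k` to a point `e k` of the dense subspace `E`, with `∑ k, 2 ^ k * ‖x k - e k‖` small,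
moves every vector of the span of the `x k` by only a small fraction of its norm. The span of the
vectors `e k` is then an infinite-dimensional subspace of `E` whose unit sphere is uniformly close
to `M`, so on it `‖T ·‖` is almost as large as on the unit sphere of `M`.
-/

section TriangularSystem

variable {𝕜 X : Type*} [NormedAddCommGroup X]

/-- A sequence of vectors of norm at most one together with functionals of norm at most one whose
matrix `f i (x j)` is lower triangular with ones on the diagonal. It is a one-sided substitute for a
biorthogonal system with bounded functionals. -/
structure IsTriangularSystem [NontriviallyNormedField 𝕜] [NormedSpace 𝕜 X]
    (x : ℕ → X) (f : ℕ → StrongDual 𝕜 X) : Prop where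
  norm_vector_le_one : ∀ k, ‖x k‖ ≤ 1
  norm_functional_le_one : ∀ k, ‖f k‖ ≤ 1
  apply_self : ∀ k, f k (x k) = 1
  apply_of_lt : ∀ i j, i < j → f i (x j) = 0

namespace IsTriangularSystem

variable [NontriviallyNormedField 𝕜] [NormedSpace 𝕜 X] {x : ℕ → X} {f : ℕ → StrongDual 𝕜 X}

lemma norm_apply_le_one (h : IsTriangularSystem x f) (i j : ℕ) : ‖f i (x j)‖ ≤ 1 :=
  (f i).le_of_opNorm_le_of_le (h.norm_functional_le_one i) (h.norm_vector_le_one j) |>.trans_eq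
    (one_mul 1)

lemma apply_linearCombination (h : IsTriangularSystem x f) (a : ℕ →₀ 𝕜) (k : ℕ) :
    f k (Finsupp.linearCombination 𝕜 x a) = ∑ i ∈ Finset.range k, a i * f k (x i) + a k := by
  have hvanish : ∀ i ∈ a.support ∪ Finset.range (k + 1), i ∉ Finset.range (k + 1) →
      a i * f k (x i) = 0 := fun i _ hi => by
    rw [h.apply_of_lt k i (by simpa using hi), mul_zero]
  calc f k (Finsupp.linearCombination 𝕜 x a)
      = a.sum fun i c => c * f k (x i) := by
        simp only [Finsupp.linearCombination_apply, map_finsuppSum, map_smul, smul_eq_mul]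
    _ = ∑ i ∈ a.support ∪ Finset.range (k + 1), a i * f k (x i) :=
        Finsupp.sum_of_support_subset a Finset.subset_union_left _ fun i _ => zero_mul _
    _ = ∑ i ∈ Finset.range (k + 1), a i * f k (x i) :=
        (Finset.sum_subset Finset.subset_union_right hvanish).symm
    _ = ∑ i ∈ Finset.range k, a i * f k (x i) + a k := by
        rw [Finset.sum_range_succ, h.apply_self, mul_one]

lemma norm_coeff_le (h : IsTriangularSystem x f) (a : ℕ →₀ 𝕜) (k : ℕ) :
    ‖a k‖ ≤ 2 ^ k * ‖Finsupp.linearCombination 𝕜 x a‖ := by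
  induction k using Nat.strong_induction_on with
  | _ k ih =>
  set v := Finsupp.linearCombination 𝕜 x a
  have hfv : ‖f k v‖ ≤ ‖v‖ :=
    (f k).le_of_opNorm_le (h.norm_functional_le_one k) v |>.trans_eq (one_mul _)
  have hterm : ∀ i ∈ Finset.range k, ‖a i * f k (x i)‖ ≤ 2 ^ i * ‖v‖ := fun i hi => by
    rw [norm_mul]
    exact (mul_le_of_le_one_right (norm_nonneg _) (h.norm_apply_le_one k i)).trans
      (ih i (Finset.mem_range.1 hi))
  have hgeom : ∑ i ∈ Finset.range k, (2 : ℝ) ^ i = 2 ^ k - 1 := by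
    rw [geom_sum_eq (by norm_num)]
    norm_num
  calc ‖a k‖ = ‖f k v - ∑ i ∈ Finset.range k, a i * f k (x i)‖ := by
        rw [h.apply_linearCombination, add_sub_cancel_left]
    _ ≤ ‖f k v‖ + ‖∑ i ∈ Finset.range k, a i * f k (x i)‖ := norm_sub_le _ _
    _ ≤ ‖v‖ + ∑ i ∈ Finset.range k, 2 ^ i * ‖v‖ := add_le_add hfv (norm_sum_le_of_le _ hterm)
    _ = 2 ^ k * ‖v‖ := by rw [← Finset.sum_mul, hgeom]; ring

lemma linearIndependent (h : IsTriangularSystem x f) : LinearIndependent 𝕜 x := by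
  refine linearIndependent_iff.2 fun a ha => Finsupp.ext fun k => ?_
  simpa [ha] using h.norm_coeff_le a k

variable {e : ℕ → X}

lemma norm_linearCombination_sub_le (h : IsTriangularSystem x f)
    (he : Summable fun k => 2 ^ k * ‖x k - e k‖) (a : ℕ →₀ 𝕜) :
    ‖Finsupp.linearCombination 𝕜 x a - Finsupp.linearCombination 𝕜 e a‖ ≤
      (∑' k, 2 ^ k * ‖x k - e k‖) * ‖Finsupp.linearCombination 𝕜 x a‖ := by
  set v := Finsupp.linearCombination 𝕜 x a
  calc ‖v - Finsupp.linearCombination 𝕜 e a‖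
      = ‖∑ k ∈ a.support, a k • (x k - e k)‖ := by
        simp only [v, Finsupp.linearCombination_apply, Finsupp.sum, smul_sub,
          Finset.sum_sub_distrib]
    _ ≤ ∑ k ∈ a.support, 2 ^ k * ‖x k - e k‖ * ‖v‖ := by
        refine norm_sum_le_of_le _ fun k _ => ?_
        rw [norm_smul, mul_right_comm]
        gcongr
        exact h.norm_coeff_le a k
    _ = (∑ k ∈ a.support, 2 ^ k * ‖x k - e k‖) * ‖v‖ := (Finset.sum_mul ..).symm
    _ ≤ (∑' k, 2 ^ k * ‖x k - e k‖) * ‖v‖ := by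
        gcongr
        exact he.sum_le_tsum _ fun k _ => by positivity

lemma linearIndependent_of_tsum_lt_one (h : IsTriangularSystem x f)
    (he : Summable fun k => 2 ^ k * ‖x k - e k‖) (he1 : ∑' k, 2 ^ k * ‖x k - e k‖ < 1) :
    LinearIndependent 𝕜 e := by
  refine linearIndependent_iff.2 fun a ha => linearIndependent_iff.1 h.linearIndependent a ?_
  have hle := h.norm_linearCombination_sub_le he a
  rw [ha, sub_zero] at hle
  by_contra hne
  exact (mul_lt_of_lt_one_left (norm_pos_iff.2 hne) he1).not_ge hle

end IsTriangularSystem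

variable [RCLike 𝕜] [NormedSpace 𝕜 X]

lemma exists_mem_norm_eq_one_forall_apply_eq_zero {M : Submodule 𝕜 X}
    (hM : ¬ FiniteDimensional 𝕜 M) (s : Finset (StrongDual 𝕜 X)) :
    ∃ x ∈ M, ‖x‖ = 1 ∧ ∀ f ∈ s, f x = 0 := by
  let evals : M →ₗ[𝕜] s → 𝕜 := LinearMap.pi fun f => f.1.toLinearMap.domRestrict M
  have hker : LinearMap.ker evals ≠ ⊥ := fun hbot =>
    hM (Module.Finite.of_injective evals (LinearMap.ker_eq_bot.1 hbot))
  obtain ⟨⟨x, hxM⟩, hx, hx0⟩ := (Submodule.ne_bot_iff _).1 hker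
  refine ⟨(‖x‖⁻¹ : 𝕜) • x, M.smul_mem _ hxM, norm_smul_inv_norm (by simpa using hx0),
    fun f hf => ?_⟩
  have hfx : f x = 0 := congrFun (LinearMap.mem_ker.1 hx) ⟨f, hf⟩
  rw [map_smul, hfx, smul_zero]

theorem exists_isTriangularSystem_forall_mem {M : Submodule 𝕜 X}
    (hM : ¬ FiniteDimensional 𝕜 M) :
    ∃ (x : ℕ → X) (f : ℕ → StrongDual 𝕜 X), IsTriangularSystem x f ∧ ∀ k, x k ∈ M := by
  classical
  obtain ⟨p, hp, hlt⟩ := exists_seq_of_forall_finset_exists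
    (fun p : X × StrongDual 𝕜 X => p.1 ∈ M ∧ ‖p.1‖ = 1 ∧ ‖p.2‖ = 1 ∧ p.2 p.1 = 1)
    (fun p q => p.2 q.1 = 0) fun s _ => by
      obtain ⟨x, hxM, hx, hsx⟩ :=
        exists_mem_norm_eq_one_forall_apply_eq_zero hM (s.image Prod.snd)
      obtain ⟨f, hf, hfx⟩ := exists_dual_vector 𝕜 x (by simp [hx])
      exact ⟨(x, f), ⟨hxM, hx, hf, by simp [hfx, hx]⟩,
        fun q hq => hsx _ (Finset.mem_image_of_mem _ hq)⟩
  exact ⟨fun k => (p k).1, fun k => (p k).2,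
    { norm_vector_le_one := fun k => (hp k).2.1.le
      norm_functional_le_one := fun k => (hp k).2.2.1.le
      apply_self := fun k => (hp k).2.2.2
      apply_of_lt := hlt },
    fun k => (hp k).1⟩

end TriangularSystem

lemma exists_forall_mem_tsum_mul_dist_le_of_dense {ι X : Type*} [Encodable ι]
    [PseudoMetricSpace X] {s : Set X} (hs : Dense s) (x : ι → X) {w : ι → ℝ} (hw : ∀ i, 0 < w i)
    {η : ℝ} (hη : 0 < η) :
    ∃ e : ι → X, (∀ i, e i ∈ s) ∧ (Summable fun i => w i * dist (x i) (e i)) ∧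
      ∑' i, w i * dist (x i) (e i) ≤ η := by
  obtain ⟨ε, hε, c, hsum, hc⟩ := posSumOfEncodable hη ι
  have hnear : ∀ i, ∃ e ∈ s, w i * dist (x i) e ≤ ε i := fun i => by
    obtain ⟨e, hes, he⟩ := hs.exists_dist_lt (x i) (div_pos (hε i) (hw i))
    exact ⟨e, hes, ((lt_div_iff₀' (hw i)).1 he).le⟩
  choose e hes he using hnear
  have hsummable : Summable fun i => w i * dist (x i) (e i) :=
    hsum.summable.of_nonneg_of_le (fun i => mul_nonneg (hw i).le dist_nonneg) he
  exact ⟨e, hes, hsummable,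
    (hsummable.tsum_le_tsum he hsum.summable).trans (hsum.tsum_eq.trans_le hc)⟩

lemma norm_sub_le_mul_norm_right {X : Type*} [SeminormedAddCommGroup X] {u v : X} {δ : ℝ}
    (hδ : 0 ≤ δ) (huv : ‖u - v‖ ≤ δ / (1 + δ) * ‖u‖) : ‖u - v‖ ≤ δ * ‖v‖ := by
  rw [div_mul_eq_mul_div, le_div_iff₀ (by positivity)] at huv
  linarith [mul_le_mul_of_nonneg_left (norm_le_norm_add_norm_sub' u v) hδ]

theorem exists_not_finiteDimensional_forall_norm_sub_le_of_dense {𝕜 X : Type*} [RCLike 𝕜]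
    [NormedAddCommGroup X] [NormedSpace 𝕜 X] {E M : Submodule 𝕜 X} (hE : Dense (E : Set X))
    (hM : ¬ FiniteDimensional 𝕜 M) {δ : ℝ} (hδ : 0 < δ) :
    ∃ N : Submodule 𝕜 E, ¬ FiniteDimensional 𝕜 N ∧
      ∀ y ∈ N, ∃ x ∈ M, ‖x - (y : X)‖ ≤ δ * ‖y‖ := by
  obtain ⟨x, f, h, hxM⟩ := exists_isTriangularSystem_forall_mem hM
  obtain ⟨e, heE, hsum, hle⟩ := exists_forall_mem_tsum_mul_dist_le_of_dense hE x
    (w := fun k => 2 ^ k) (fun k => by positivity) (η := δ / (1 + δ)) (by positivity)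
  lift e to ℕ → E using heE
  simp only [dist_eq_norm] at hsum hle
  have hlt : δ / (1 + δ) < 1 := (div_lt_one (by positivity)).2 (by linarith)
  have he : LinearIndependent 𝕜 e :=
    .of_comp E.subtype (h.linearIndependent_of_tsum_lt_one hsum (hle.trans_lt hlt))
  refine ⟨Submodule.span 𝕜 (Set.range e), fun _ => ?_, fun y hy => ?_⟩
  · exact not_finite_iff_infinite.2 inferInstance (linearIndependent_span he).finite
  · rw [← Finsupp.range_linearCombination] at hy
    obtain ⟨a, rfl⟩ := hy
    set u := Finsupp.linearCombination 𝕜 x a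
    set v := Finsupp.linearCombination 𝕜 e a
    have hv : (v : X) = Finsupp.linearCombination 𝕜 (fun k => (e k : X)) a :=
      Finsupp.apply_linearCombination 𝕜 E.subtype e a
    have huv : ‖u - v‖ ≤ δ / (1 + δ) * ‖u‖ := by
      rw [hv]
      exact (h.norm_linearCombination_sub_le hsum a).trans (by gcongr)
    have hu : u ∈ M := M.finsuppSum_mem _ _ _ fun k _ => M.smul_mem _ (hxM k)
    exact ⟨u, hu, norm_sub_le_mul_norm_right hδ.le huv⟩

lemma nontrivial_of_not_moduleFinite {R M : Type*} [Semiring R] [AddCommMonoid M] [Module R M]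
    (hM : ¬ Module.Finite R M) : Nontrivial M :=
  not_subsingleton_iff_nontrivial.1 fun _ => hM inferInstance

section SphereInf

variable {X Y : Type*} [NormedAddCommGroup X] [NormedSpace ℝ X] [NormedAddCommGroup Y]
  [NormedSpace ℝ Y] (T : X →L[ℝ] Y) (M : Submodule ℝ X)

lemma sphereInf_nonneg : 0 ≤ sphereInf T M := by
  refine Real.sInf_nonneg ?_
  rintro _ ⟨m, -, -, rfl⟩
  exact norm_nonneg _

variable {M}

lemma sphereInf_mul_norm_le {m : X} (hm : m ∈ M) : sphereInf T M * ‖m‖ ≤ ‖T m‖ := by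
  rcases eq_or_ne m 0 with rfl | h0
  · simp
  have hbdd : BddBelow {s : ℝ | ∃ m : X, m ∈ M ∧ ‖m‖ = 1 ∧ s = ‖T m‖} := by
    refine ⟨0, ?_⟩
    rintro _ ⟨m, -, -, rfl⟩
    exact norm_nonneg _
  have hle : sphereInf T M ≤ ‖T (‖m‖⁻¹ • m)‖ :=
    csInf_le hbdd ⟨_, M.smul_mem _ hm, norm_smul_inv_norm h0, rfl⟩
  rwa [map_smul, norm_smul, norm_inv, norm_norm, inv_mul_eq_div,
    le_div_iff₀ (norm_pos_iff.2 h0)] at hle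

lemma le_sphereInf [Nontrivial M] {c : ℝ} (hc : ∀ m ∈ M, ‖m‖ = 1 → c ≤ ‖T m‖) :
    c ≤ sphereInf T M := by
  obtain ⟨m, hm⟩ := exists_norm_eq M zero_le_one
  refine le_csInf ⟨_, m, m.2, hm, rfl⟩ ?_
  rintro _ ⟨m, hm, hm1, rfl⟩
  exact hc m hm hm1

variable (M) in
lemma sphereInf_le_opNorm [Nontrivial M] : sphereInf T M ≤ ‖T‖ := by
  obtain ⟨m, hm⟩ := exists_norm_eq M zero_le_one
  have hle := (sphereInf_mul_norm_le T m.2).trans (T.le_opNorm m)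
  rwa [← Submodule.coe_norm, hm, mul_one, mul_one] at hle

lemma sphereInf_mul_norm_le_add {x : X} (hx : x ∈ M) (y : X) :
    sphereInf T M * ‖y‖ ≤ ‖T y‖ + (sphereInf T M + ‖T‖) * ‖x - y‖ := by
  have hTx : ‖T x‖ ≤ ‖T y‖ + ‖T‖ * ‖x - y‖ := by
    refine (norm_le_norm_add_norm_sub' _ (T y)).trans ?_
    rw [← map_sub]
    gcongr
    exact T.le_opNorm _
  calc sphereInf T M * ‖y‖ ≤ sphereInf T M * (‖x‖ + ‖x - y‖) := by
        gcongr
        · exact sphereInf_nonneg T M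
        · exact norm_le_norm_add_norm_sub x y
    _ = sphereInf T M * ‖x‖ + sphereInf T M * ‖x - y‖ := mul_add ..
    _ ≤ ‖T y‖ + ‖T‖ * ‖x - y‖ + sphereInf T M * ‖x - y‖ := by
        gcongr
        exact (sphereInf_mul_norm_le T hx).trans hTx
    _ = ‖T y‖ + (sphereInf T M + ‖T‖) * ‖x - y‖ := by ring

lemma sphereInf_le_sphereInf_restrict_add {E : Submodule ℝ X} {N : Submodule ℝ E} [Nontrivial N]
    {δ : ℝ} (hNM : ∀ y ∈ N, ∃ x ∈ M, ‖x - (y : X)‖ ≤ δ * ‖y‖) :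
    sphereInf T M ≤ sphereInf (T.comp E.subtypeL) N + (sphereInf T M + ‖T‖) * δ := by
  refine sub_le_iff_le_add.1 (le_sphereInf _ fun y hy hy1 => sub_le_iff_le_add.2 ?_)
  obtain ⟨x, hx, hxy⟩ := hNM y hy
  rw [hy1, mul_one] at hxy
  calc sphereInf T M = sphereInf T M * ‖(y : X)‖ := by rw [← Submodule.coe_norm, hy1, mul_one]
    _ ≤ ‖T y‖ + (sphereInf T M + ‖T‖) * ‖x - y‖ := sphereInf_mul_norm_le_add T hx y
    _ ≤ ‖T y‖ + (sphereInf T M + ‖T‖) * δ := by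
        gcongr
        exact add_nonneg (sphereInf_nonneg T M) (norm_nonneg T)

lemma sphereInf_le_opTau (hM : ¬ FiniteDimensional ℝ M) : sphereInf T M ≤ opTau T := by
  refine le_csSup ⟨‖T‖, ?_⟩ ⟨M, hM, rfl⟩
  rintro _ ⟨M, hM, rfl⟩
  have := nontrivial_of_not_moduleFinite hM
  exact sphereInf_le_opNorm T M

variable {T} in
lemma opTau_le (hX : ¬ FiniteDimensional ℝ X) {c : ℝ}
    (hc : ∀ M : Submodule ℝ X, ¬ FiniteDimensional ℝ M → sphereInf T M ≤ c) : opTau T ≤ c := by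
  refine csSup_le ⟨_, ⊤, fun _ => hX (Module.Finite.equiv Submodule.topEquiv), rfl⟩ ?_
  rintro _ ⟨M, hM, rfl⟩
  exact hc M hM

end SphereInf

/-- `τ(T|_E) ≥ τ(T)` for any dense subspace `E`. -/
theorem tau_restrict_ge {X Y : Type*} [NormedAddCommGroup X] [NormedSpace ℝ X]
    [NormedAddCommGroup Y] [NormedSpace ℝ Y] (hX : ¬ FiniteDimensional ℝ X)
    (T : X →L[ℝ] Y) (E : Submodule ℝ X) (hE : Dense (E : Set X)) :
    opTau (T.comp E.subtypeL) ≥ opTau T := by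
  refine opTau_le hX fun M hM => le_of_forall_pos_le_add fun ε hε => ?_
  obtain ⟨δ, hδ, hδε⟩ := exists_pos_mul_lt hε (sphereInf T M + ‖T‖)
  obtain ⟨N, hN, hNM⟩ := exists_not_finiteDimensional_forall_norm_sub_le_of_dense hE hM hδ
  have := nontrivial_of_not_moduleFinite hN
  calc sphereInf T M
      ≤ sphereInf (T.comp E.subtypeL) N + (sphereInf T M + ‖T‖) * δ :=
        sphereInf_le_sphereInf_restrict_add T hNM
    _ ≤ opTau (T.comp E.subtypeL) + ε := by
        gcongr
        exact sphereInf_le_opTau _ hN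
end
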